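/- Let 1/2 < s < 1. Then there exists C > 0 such that for all nonnegative sequences ω⁽¹⁾, ω⁽²⁾, ω⁽³⁾ : ℤ → [0,∞): ( Σ_{n ∈ ℤ} ⟨n⟩^{2s} ( Σ_{(n₁,n₂,n₃) ∈ ℤ³ : n₁ − n₂ + n₃ = n, n₂ ≠ n₁, n₂ ≠ n₃} |n₂| ⟨φ⟩^{−1/2} ω⁽¹⁾_{n₁} ω⁽²⁾_{n₂} ω⁽³⁾_{n₃} )² )^{1/2} ≤ C ‖ω⁽¹⁾‖_{ℓ²_s} ‖ω⁽²⁾‖_{ℓ²_s} ‖ω⁽³⁾‖_{ℓ²_s}. -/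

import Mathlib

open scoped ENNReal NNReal

/-- `⟨x⟩ = (1+x²)^{1/2}`. -/
noncomputable def jbR (x : ℝ) : ℝ := Real.sqrt (1 + x ^ 2)

/-- The weighted `ℓ²_s(ℤ)` norm (valued in `[0,∞]`). -/
noncomputable def l2sZ (s : ℝ) (ω : ℤ → ℝ≥0) : ℝ≥0∞ :=
  (∑' n : ℤ, ENNReal.ofReal (jbR (n : ℝ) ^ (2 * s)) * ((ω n : ℝ≥0∞)) ^ 2) ^ (1/2 : ℝ)

/-- The phase `φ = 2(n₂-n₁)(n₂-n₃)` of the cubic derivative NLS. -/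
def phiDNLS (n₁ n₂ n₃ : ℤ) : ℤ := 2 * (n₂ - n₁) * (n₂ - n₃)

/-
By Cauchy-Schwarz over the fibre `n = n₁ - n₂ + n₃` it suffices to bound, uniformly in `n`, the sum
over `(n₁, n₃)` of the square of the multiplier normalized by the weights `⟨·⟩^s`. Since
`⟨n⟩ ≤ 4 ⟨n₁⟩ ⟨n₂⟩ ⟨n₃⟩`, the bound for an exponent `σ` implies the one for every `s ≥ σ`, so one
may assume `1/2 < s ≤ 1`. As `n₂ - n₁ = n₃ - n` and `n₂ - n₃ = n₁ - n`, nonresonance gives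
`⟨φ⟩ ≥ ⟨n₁ - n⟩ ⟨n₃ - n⟩`. Splitting `⟨n₂⟩^{2-2s}` according to `n₂ = n + (n₁ - n) + (n₃ - n)` then
dominates the squared multiplier by a product of a function of `n₁` and a function of `n₃`, each
with sum comparable to `∑ ⟨m⟩^{-2s}`.
-/

section JapaneseBracket

lemma one_le_jbR (x : ℝ) : 1 ≤ jbR x :=
  Real.one_le_sqrt.mpr (le_add_of_nonneg_right (sq_nonneg x))

lemma jbR_pos (x : ℝ) : 0 < jbR x := one_pos.trans_le (one_le_jbR x)

lemma jbR_sq (x : ℝ) : jbR x ^ 2 = 1 + x ^ 2 := Real.sq_sqrt (by positivity)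

lemma jbR_neg (x : ℝ) : jbR (-x) = jbR x := by simp only [jbR, neg_sq]

lemma abs_le_jbR (x : ℝ) : |x| ≤ jbR x :=
  abs_le_of_sq_le_sq (by rw [jbR_sq]; linarith) (jbR_pos x).le

lemma jbR_add_le (x y : ℝ) : jbR (x + y) ≤ jbR x + jbR y := by
  have hx := jbR_pos x
  have hy := jbR_pos y
  have hxy : x * y ≤ jbR x * jbR y :=
    calc x * y ≤ |x| * |y| := (le_abs_self _).trans_eq (abs_mul x y)
      _ ≤ jbR x * jbR y := by gcongr <;> exact abs_le_jbR _
  refine le_of_sq_le_sq ?_ (by positivity)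
  linarith [jbR_sq x, jbR_sq y, jbR_sq (x + y), add_sq x y, add_sq (jbR x) (jbR y)]

lemma jbR_add_le_two_mul (x y : ℝ) : jbR (x + y) ≤ 2 * (jbR x * jbR y) := by
  nlinarith [jbR_add_le x y, one_le_jbR x, one_le_jbR y]

lemma jbR_mul_jbR_le {a b : ℝ} (ha : 1 ≤ |a|) (hb : 1 ≤ |b|) :
    jbR a * jbR b ≤ jbR (2 * a * b) := by
  have ha' : 1 ≤ a ^ 2 := (one_le_sq_iff_one_le_abs a).mpr ha
  have hb' : 1 ≤ b ^ 2 := (one_le_sq_iff_one_le_abs b).mpr hb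
  refine le_of_sq_le_sq ?_ (jbR_pos _).le
  rw [mul_pow, jbR_sq, jbR_sq, jbR_sq]
  nlinarith [mul_le_mul ha' hb' zero_le_one (sq_nonneg a)]

lemma summable_jbR_rpow_neg {β : ℝ} (hβ : 1 < β) : Summable fun m : ℤ => jbR m ^ (-β) := by
  refine (Real.summable_abs_int_rpow hβ).of_norm_bounded_eventually ?_
  filter_upwards [(Set.finite_singleton (0 : ℤ)).compl_mem_cofinite] with m hm
  rw [Real.norm_of_nonneg (Real.rpow_nonneg (jbR_pos _).le _)]
  exact Real.rpow_le_rpow_of_nonpos (abs_pos.mpr (Int.cast_ne_zero.mpr hm)) (abs_le_jbR _)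
    (by linarith)

end JapaneseBracket

section RealPowers

lemma rpow_le_one_add_rpow {t α β : ℝ} (ht : 0 ≤ t) (hα : 0 ≤ α) (hαβ : α ≤ β) :
    t ^ α ≤ 1 + t ^ β := by
  have htβ : 0 ≤ t ^ β := Real.rpow_nonneg ht β
  rcases le_total t 1 with h | h
  · linarith [Real.rpow_le_one ht h hα]
  · linarith [Real.rpow_le_rpow_of_exponent_le h hαβ]

lemma div_rpow_mul_rpow_neg_le {N x a α β : ℝ} (hN : 0 ≤ N) (hx : 0 < x) (ha : 0 < a)
    (hNxa : N ≤ x + a) (hα : 0 ≤ α) (hα' : α ≤ 1) (hαβ : α ≤ β) :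
    (N / a) ^ α * x ^ (-β) ≤ 2 * x ^ (-β) + a ^ (-β) := by
  have hratio : (N / a) ^ α ≤ 2 + (x / a) ^ β :=
    calc (N / a) ^ α ≤ (x / a + 1) ^ α := by
          gcongr
          rw [div_add_one ha.ne']
          gcongr
      _ ≤ (x / a) ^ α + 1 := by
          simpa using Real.rpow_add_le_add_rpow (div_nonneg hx.le ha.le) zero_le_one hα hα'
      _ ≤ 2 + (x / a) ^ β := by
          linarith [rpow_le_one_add_rpow (div_nonneg hx.le ha.le) hα hαβ]
  calc (N / a) ^ α * x ^ (-β) ≤ (2 + (x / a) ^ β) * x ^ (-β) := by gcongr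
    _ = 2 * x ^ (-β) + a ^ (-β) := by
        rw [Real.div_rpow hx.le ha.le, Real.rpow_neg hx.le, Real.rpow_neg ha.le]
        field_simp

lemma rpow_mul_rpow_two_sub_mul_inv_le {N y a b β : ℝ} (hN : 0 < N) (hy : 0 ≤ y) (ha : 0 < a)
    (hb : 0 < b) (hyNab : y ≤ N + a + b) (hβ : 1 ≤ β) (hβ' : β ≤ 2) :
    N ^ β * y ^ (2 - β) * (a * b)⁻¹ ≤
      (N / a + (N / a) ^ (β - 1)) * (N / b + (N / b) ^ (β - 1)) := by
  have hsplit : y ^ (2 - β) ≤ N ^ (2 - β) + a ^ (2 - β) + b ^ (2 - β) :=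
    calc y ^ (2 - β) ≤ (N + a + b) ^ (2 - β) := by gcongr
      _ ≤ (N + a) ^ (2 - β) + b ^ (2 - β) :=
          Real.rpow_add_le_add_rpow (by positivity) hb.le (by linarith) (by linarith)
      _ ≤ N ^ (2 - β) + a ^ (2 - β) + b ^ (2 - β) := by
          gcongr
          exact Real.rpow_add_le_add_rpow hN.le ha.le (by linarith) (by linarith)
  have hdiag : N ^ β * N ^ (2 - β) * (a * b)⁻¹ = (N / a) * (N / b) := by
    rw [← Real.rpow_add hN, add_sub_cancel, Real.rpow_two]
    field_simp
  have hoff {c d : ℝ} (hc : 0 < c) (hd : 0 < d) :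
      N ^ β * c ^ (2 - β) * (c * d)⁻¹ = (N / c) ^ (β - 1) * (N / d) := by
    rw [Real.div_rpow hN.le hc.le, Real.rpow_sub_one hN.ne', Real.rpow_sub_one hc.ne',
      Real.rpow_sub hc, Real.rpow_two]
    field_simp
  have hoff_b : N ^ β * b ^ (2 - β) * (a * b)⁻¹ = (N / a) * (N / b) ^ (β - 1) := by
    rw [mul_comm a b, hoff hb ha, mul_comm]
  have hcross : 0 ≤ (N / a) ^ (β - 1) * (N / b) ^ (β - 1) := by positivity
  calc N ^ β * y ^ (2 - β) * (a * b)⁻¹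
      ≤ N ^ β * (N ^ (2 - β) + a ^ (2 - β) + b ^ (2 - β)) * (a * b)⁻¹ := by gcongr
    _ = (N / a) * (N / b) + (N / a) ^ (β - 1) * (N / b) + (N / a) * (N / b) ^ (β - 1) := by
        rw [mul_add, mul_add, add_mul, add_mul, hdiag, hoff ha hb, hoff_b]
    _ ≤ (N / a + (N / a) ^ (β - 1)) * (N / b + (N / b) ^ (β - 1)) := by linarith

lemma sq_div_rpow_mul_rpow_le {N x y z c d Φ : ℝ} (hN : 0 < N) (hx : 0 < x) (hy : 0 < y)
    (hz : 0 < z) (hc : 0 ≤ c) (hcy : c ≤ y) (hd : 0 < d) (hdΦ : d ≤ Φ) (s : ℝ) :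
    ((N / (x * y * z)) ^ s * (c * Φ ^ (-(1 / 2) : ℝ))) ^ 2 ≤
      N ^ (2 * s) * y ^ (2 - 2 * s) * d⁻¹ * (x ^ (-(2 * s)) * z ^ (-(2 * s))) := by
  have hsq {t : ℝ} (ht : 0 ≤ t) (r : ℝ) : (t ^ r) ^ 2 = t ^ (2 * r) := by
    rw [mul_comm, Real.rpow_mul ht, Real.rpow_two]
  have hΦ : (Φ ^ (-(1 / 2) : ℝ)) ^ 2 = Φ⁻¹ := by
    rw [hsq (hd.le.trans hdΦ), ← Real.rpow_neg_one]
    norm_num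
  have hratio : ((N / (x * y * z)) ^ s) ^ 2 =
      N ^ (2 * s) * (x ^ (-(2 * s)) * y ^ (-(2 * s)) * z ^ (-(2 * s))) := by
    rw [hsq (by positivity), Real.div_rpow hN.le (by positivity),
      Real.mul_rpow (by positivity) hz.le, Real.mul_rpow hx.le hy.le, Real.rpow_neg hx.le,
      Real.rpow_neg hy.le, Real.rpow_neg hz.le, div_eq_mul_inv, mul_inv, mul_inv]
  calc ((N / (x * y * z)) ^ s * (c * Φ ^ (-(1 / 2) : ℝ))) ^ 2
      = N ^ (2 * s) * (y ^ (-(2 * s)) * c ^ 2) * Φ⁻¹ * (x ^ (-(2 * s)) * z ^ (-(2 * s))) := by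
        rw [mul_pow, mul_pow, hratio, hΦ]
        ring
    _ ≤ N ^ (2 * s) * (y ^ (-(2 * s)) * y ^ 2) * d⁻¹ * (x ^ (-(2 * s)) * z ^ (-(2 * s))) := by
        have := inv_nonneg.mpr (hd.le.trans hdΦ)
        gcongr
    _ = N ^ (2 * s) * y ^ (2 - 2 * s) * d⁻¹ * (x ^ (-(2 * s)) * z ^ (-(2 * s))) := by
        rw [← Real.rpow_two, ← Real.rpow_add hy, neg_add_eq_sub]

end RealPowers

section Multiplier

/-- The multiplier `|n₂| ⟨φ⟩^{-1/2}` of the trilinear form, normalized by the weights of `ℓ²_s`: it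
turns the estimate for the `ωⱼ` in `ℓ²_s` into one for `⟨·⟩^s ωⱼ` in `ℓ²`. The output frequency is
written out as `n₁ - n₂ + n₃`. -/
noncomputable def normalizedMultiplier (s : ℝ) (n₁ n₂ n₃ : ℤ) : ℝ :=
  (jbR (n₁ - n₂ + n₃ : ℤ) / (jbR n₁ * jbR n₂ * jbR n₃)) ^ s *
    (|(n₂ : ℝ)| * jbR (phiDNLS n₁ n₂ n₃ : ℤ) ^ (-(1 / 2) : ℝ))

lemma normalizedMultiplier_nonneg (s : ℝ) (n₁ n₂ n₃ : ℤ) : 0 ≤ normalizedMultiplier s n₁ n₂ n₃ := by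
  have h₁ := jbR_pos n₁
  have h₂ := jbR_pos n₂
  have h₃ := jbR_pos n₃
  have hn := jbR_pos (n₁ - n₂ + n₃ : ℤ)
  have hφ := jbR_pos (phiDNLS n₁ n₂ n₃ : ℤ)
  unfold normalizedMultiplier
  positivity

lemma normalizedMultiplier_le_of_le {σ s : ℝ} (hσs : σ ≤ s) (n₁ n₂ n₃ : ℤ) :
    normalizedMultiplier s n₁ n₂ n₃ ≤ 4 ^ (s - σ) * normalizedMultiplier σ n₁ n₂ n₃ := by
  have h₁ := jbR_pos n₁
  have h₂ := jbR_pos n₂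
  have h₃ := jbR_pos n₃
  have hn := jbR_pos (n₁ - n₂ + n₃ : ℤ)
  have hφ := jbR_pos (phiDNLS n₁ n₂ n₃ : ℤ)
  have hpeetre : jbR (n₁ - n₂ + n₃ : ℤ) / (jbR n₁ * jbR n₂ * jbR n₃) ≤ 4 := by
    rw [div_le_iff₀ (by positivity)]
    push_cast
    calc jbR (n₁ - n₂ + n₃) ≤ 2 * (jbR (n₁ + -n₂) * jbR n₃) := by
          simpa only [sub_eq_add_neg] using jbR_add_le_two_mul (n₁ - n₂) n₃
      _ ≤ 2 * ((2 * (jbR n₁ * jbR n₂)) * jbR n₃) := by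
          gcongr
          simpa only [jbR_neg] using jbR_add_le_two_mul n₁ (-n₂)
      _ = 4 * (jbR n₁ * jbR n₂ * jbR n₃) := by ring
  unfold normalizedMultiplier
  set r := jbR (n₁ - n₂ + n₃ : ℤ) / (jbR n₁ * jbR n₂ * jbR n₃)
  have hr : 0 < r := by positivity
  have hpow : r ^ s ≤ 4 ^ (s - σ) * r ^ σ :=
    calc r ^ s = r ^ (s - σ) * r ^ σ := by rw [← Real.rpow_add hr, sub_add_cancel]
      _ ≤ 4 ^ (s - σ) * r ^ σ := by
          gcongr
  rw [← mul_assoc (4 ^ (s - σ))]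
  gcongr

/-- The one-variable majorant of the multiplier, peaked at `m = 0` and at `m = n`. -/
noncomputable def twoPeak (β : ℝ) (n m : ℤ) : ℝ := jbR m ^ (-β) + jbR (m - n : ℤ) ^ (-β)

lemma twoPeak_nonneg (β : ℝ) (n m : ℤ) : 0 ≤ twoPeak β n m :=
  add_nonneg (Real.rpow_nonneg (jbR_pos _).le _) (Real.rpow_nonneg (jbR_pos _).le _)

lemma hasSum_twoPeak {β : ℝ} (hβ : 1 < β) (n : ℤ) :
    HasSum (twoPeak β n) (2 * ∑' m : ℤ, jbR m ^ (-β)) := by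
  have h := (summable_jbR_rpow_neg hβ).hasSum
  rw [two_mul]
  exact h.add ((Equiv.subRight n).hasSum_iff.mpr h)

lemma tsum_ofReal_twoPeak {β : ℝ} (hβ : 1 < β) (n : ℤ) :
    ∑' m, ENNReal.ofReal (twoPeak β n m) = ENNReal.ofReal (2 * ∑' m : ℤ, jbR m ^ (-β)) := by
  rw [← ENNReal.ofReal_tsum_of_nonneg (twoPeak_nonneg β n) (hasSum_twoPeak hβ n).summable,
    (hasSum_twoPeak hβ n).tsum_eq]

lemma div_add_div_rpow_mul_rpow_neg_le_twoPeak {β : ℝ} (hβ : 1 ≤ β) (hβ' : β ≤ 2) (n m : ℤ) :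
    (jbR n / jbR (m - n : ℤ) + (jbR n / jbR (m - n : ℤ)) ^ (β - 1)) * jbR m ^ (-β) ≤
      4 * twoPeak β n m := by
  have hn := jbR_pos n
  have hm := jbR_pos m
  have hmn := jbR_pos (m - n : ℤ)
  have htriangle : jbR n ≤ jbR m + jbR (m - n : ℤ) := by
    have h := jbR_add_le m (-(m - n : ℤ) : ℝ)
    rw [jbR_neg] at h
    convert h using 2
    push_cast
    ring
  have hlin := div_rpow_mul_rpow_neg_le hn.le hm hmn htriangle zero_le_one le_rfl hβ
  have hpow := div_rpow_mul_rpow_neg_le hn.le hm hmn htriangle (α := β - 1) (β := β)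
    (by linarith) (by linarith) (by linarith)
  have hpos : 0 ≤ jbR (m - n : ℤ) ^ (-β) := by positivity
  rw [Real.rpow_one] at hlin
  unfold twoPeak
  linarith

lemma jbR_mul_jbR_le_jbR_phiDNLS {n₁ n₂ n₃ : ℤ} (h₁ : n₂ ≠ n₁) (h₃ : n₂ ≠ n₃) :
    jbR (n₂ - n₁ : ℤ) * jbR (n₂ - n₃ : ℤ) ≤ jbR (phiDNLS n₁ n₂ n₃ : ℤ) := by
  have h {k : ℤ} (hk : k ≠ 0) : (1 : ℝ) ≤ |(k : ℝ)| := by exact_mod_cast Int.one_le_abs hk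
  simpa [phiDNLS] using jbR_mul_jbR_le (h (sub_ne_zero.mpr h₁)) (h (sub_ne_zero.mpr h₃))

lemma sq_normalizedMultiplier_le_weights (s : ℝ) {n n₁ n₂ n₃ : ℤ} (hn : n₁ - n₂ + n₃ = n)
    (h₁ : n₂ ≠ n₁) (h₃ : n₂ ≠ n₃) :
    normalizedMultiplier s n₁ n₂ n₃ ^ 2 ≤
      jbR n ^ (2 * s) * jbR n₂ ^ (2 - 2 * s) * (jbR (n₃ - n : ℤ) * jbR (n₁ - n : ℤ))⁻¹ *
        (jbR n₁ ^ (-(2 * s)) * jbR n₃ ^ (-(2 * s))) := by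
  have hphase := jbR_mul_jbR_le_jbR_phiDNLS h₁ h₃
  rw [show n₂ - n₁ = n₃ - n by omega, show n₂ - n₃ = n₁ - n by omega] at hphase
  rw [normalizedMultiplier, hn]
  exact sq_div_rpow_mul_rpow_le (jbR_pos _) (jbR_pos _) (jbR_pos _) (jbR_pos _) (abs_nonneg _)
    (abs_le_jbR _) (mul_pos (jbR_pos _) (jbR_pos _)) hphase s

lemma sq_normalizedMultiplier_le {s : ℝ} (hs : 1 / 2 ≤ s) (hs' : s ≤ 1) {n n₁ n₂ n₃ : ℤ}
    (hn : n₁ - n₂ + n₃ = n) (h₁ : n₂ ≠ n₁) (h₃ : n₂ ≠ n₃) :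
    normalizedMultiplier s n₁ n₂ n₃ ^ 2 ≤
      16 * (twoPeak (2 * s) n n₁ * twoPeak (2 * s) n n₃) := by
  have hβ : 1 ≤ 2 * s := by linarith
  have hβ' : 2 * s ≤ 2 := by linarith
  have htriangle : jbR n₂ ≤ jbR n + jbR (n₃ - n : ℤ) + jbR (n₁ - n : ℤ) := by
    have hfreq : n₂ = n + (n₃ - n) + (n₁ - n) := by omega
    conv_lhs => rw [hfreq, Int.cast_add, Int.cast_add]
    exact (jbR_add_le _ _).trans (add_le_add_left (jbR_add_le _ _) _)
  set u := jbR n / jbR (n₁ - n : ℤ) + (jbR n / jbR (n₁ - n : ℤ)) ^ (2 * s - 1)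
  set v := jbR n / jbR (n₃ - n : ℤ) + (jbR n / jbR (n₃ - n : ℤ)) ^ (2 * s - 1)
  have hsplit : jbR n ^ (2 * s) * jbR n₂ ^ (2 - 2 * s) *
      (jbR (n₃ - n : ℤ) * jbR (n₁ - n : ℤ))⁻¹ ≤ v * u :=
    rpow_mul_rpow_two_sub_mul_inv_le (jbR_pos _) (jbR_pos _).le (jbR_pos _) (jbR_pos _)
      htriangle hβ hβ'
  have hu : u * jbR n₁ ^ (-(2 * s)) ≤ 4 * twoPeak (2 * s) n n₁ :=
    div_add_div_rpow_mul_rpow_neg_le_twoPeak hβ hβ' n n₁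
  have hv : v * jbR n₃ ^ (-(2 * s)) ≤ 4 * twoPeak (2 * s) n n₃ :=
    div_add_div_rpow_mul_rpow_neg_le_twoPeak hβ hβ' n n₃
  have hx := Real.rpow_nonneg (jbR_pos n₁).le (-(2 * s))
  have hz := Real.rpow_nonneg (jbR_pos n₃).le (-(2 * s))
  have hv₀ : 0 ≤ v := by
    have := div_nonneg (jbR_pos n).le (jbR_pos (n₃ - n : ℤ)).le
    positivity
  have hpeak₀ := twoPeak_nonneg (2 * s) n n₁
  calc normalizedMultiplier s n₁ n₂ n₃ ^ 2
      ≤ v * u * (jbR n₁ ^ (-(2 * s)) * jbR n₃ ^ (-(2 * s))) :=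
        (sq_normalizedMultiplier_le_weights s hn h₁ h₃).trans (by gcongr)
    _ = (u * jbR n₁ ^ (-(2 * s))) * (v * jbR n₃ ^ (-(2 * s))) := by ring
    _ ≤ (4 * twoPeak (2 * s) n n₁) * (4 * twoPeak (2 * s) n n₃) := by gcongr
    _ = 16 * (twoPeak (2 * s) n n₁ * twoPeak (2 * s) n n₃) := by ring

lemma sq_normalizedMultiplier_le_of_le {σ s : ℝ} (hσ : 1 / 2 ≤ σ) (hσ' : σ ≤ 1) (hσs : σ ≤ s)
    {n n₁ n₂ n₃ : ℤ} (hn : n₁ - n₂ + n₃ = n) (h₁ : n₂ ≠ n₁) (h₃ : n₂ ≠ n₃) :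
    normalizedMultiplier s n₁ n₂ n₃ ^ 2 ≤ (4 ^ (s - σ) * 4) ^ 2 *
      (twoPeak (2 * σ) n n₁ * twoPeak (2 * σ) n n₃) :=
  calc normalizedMultiplier s n₁ n₂ n₃ ^ 2
      ≤ (4 ^ (s - σ) * normalizedMultiplier σ n₁ n₂ n₃) ^ 2 :=
        pow_le_pow_left₀ (normalizedMultiplier_nonneg _ _ _ _)
          (normalizedMultiplier_le_of_le hσs n₁ n₂ n₃) 2
    _ = (4 ^ (s - σ)) ^ 2 * normalizedMultiplier σ n₁ n₂ n₃ ^ 2 := mul_pow _ _ 2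
    _ ≤ (4 ^ (s - σ)) ^ 2 *
          (16 * (twoPeak (2 * σ) n n₁ * twoPeak (2 * σ) n n₃)) := by
        gcongr
        exact sq_normalizedMultiplier_le hσ hσ' hn h₁ h₃
    _ = (4 ^ (s - σ) * 4) ^ 2 *
          (twoPeak (2 * σ) n n₁ * twoPeak (2 * σ) n n₃) := by ring

end Multiplier

section ExtendedSums

lemma sq_tsum_mul_le {ι : Type*} (f g : ι → ℝ≥0∞) :
    (∑' i, f i * g i) ^ 2 ≤ (∑' i, f i ^ 2) * ∑' i, g i ^ 2 := by
  have hroot : ∑' i, f i * g i ≤ ((∑' i, f i ^ 2) * ∑' i, g i ^ 2) ^ (1 / 2 : ℝ) := by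
    rw [ENNReal.tsum_eq_iSup_sum]
    refine iSup_le fun t => ?_
    refine (ENNReal.inner_le_Lp_mul_Lq t f g Real.HolderConjugate.two_two).trans ?_
    rw [ENNReal.mul_rpow_of_nonneg _ _ (by norm_num)]
    simp only [ENNReal.rpow_two]
    gcongr <;> exact ENNReal.sum_le_tsum t
  calc (∑' i, f i * g i) ^ 2 ≤ (((∑' i, f i ^ 2) * ∑' i, g i ^ 2) ^ (1 / 2 : ℝ)) ^ 2 := by gcongr
    _ = (∑' i, f i ^ 2) * ∑' i, g i ^ 2 := by
        rw [← ENNReal.rpow_two, ← ENNReal.rpow_mul]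
        norm_num

lemma tsum_prod_mul {ι κ : Type*} (f : ι → ℝ≥0∞) (g : κ → ℝ≥0∞) :
    ∑' p : ι × κ, f p.1 * g p.2 = (∑' i, f i) * ∑' k, g k := by
  simp_rw [ENNReal.tsum_prod (f := fun i k => f i * g k), ENNReal.tsum_mul_left,
    ENNReal.tsum_mul_right]

lemma tsum_tsum_subtype_fiber_le {ι κ : Type*} (π : ι → κ) (P : ι → Prop) (f : ι → ℝ≥0∞) :
    ∑' k, ∑' p : {i // π i = k ∧ P i}, f p ≤ ∑' i, f i := by
  have hinj : Function.Injective fun p : Σ k, {i // π i = k ∧ P i} => p.2.1 := by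
    rintro ⟨_, i, rfl, _⟩ ⟨_, _, rfl, _⟩ (rfl : i = _)
    rfl
  rw [← ENNReal.tsum_sigma fun k (p : {i // π i = k ∧ P i}) => f p]
  exact ENNReal.tsum_comp_le_tsum_of_injective hinj f

end ExtendedSums

section TrilinearEstimate

/-- The index set of the inner sum: frequencies `(n₁, n₂, n₃)` with `n₁ - n₂ + n₃ = n` for which the
phase `phiDNLS n₁ n₂ n₃` does not vanish. -/
abbrev NonresonantTriple (n : ℤ) : Type :=
  {q : ℤ × ℤ × ℤ // q.1 - q.2.1 + q.2.2 = n ∧ q.2.1 ≠ q.1 ∧ q.2.1 ≠ q.2.2}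

lemma tsum_nonresonantTriple_le (n : ℤ) (g h : ℤ → ℝ≥0∞) :
    ∑' p : NonresonantTriple n, g p.1.1 * h p.1.2.2 ≤ (∑' m, g m) * ∑' m, h m := by
  have hinj : Function.Injective fun p : NonresonantTriple n => (p.1.1, p.1.2.2) := by
    rintro ⟨⟨a, b, c⟩, hn, _⟩ ⟨⟨a', b', c'⟩, hn', _⟩ heq
    simp only [Prod.mk.injEq, Subtype.mk.injEq] at heq hn hn' ⊢
    omega
  rw [← tsum_prod_mul]
  exact ENNReal.tsum_comp_le_tsum_of_injective hinj fun z => g z.1 * h z.2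

lemma tsum_sq_tsum_nonresonantTriple_le {F : ℤ × ℤ × ℤ → ℝ≥0∞} {K : ℝ≥0∞}
    (hF : ∀ n, ∑' p : NonresonantTriple n, F p ^ 2 ≤ K) (f₁ f₂ f₃ : ℤ → ℝ≥0∞) :
    ∑' n, (∑' p : NonresonantTriple n, F p * (f₁ p.1.1 * (f₂ p.1.2.1 * f₃ p.1.2.2))) ^ 2 ≤
      K * ((∑' n, f₁ n ^ 2) * ((∑' n, f₂ n ^ 2) * ∑' n, f₃ n ^ 2)) := by
  calc _ ≤ ∑' n, K * ∑' p : NonresonantTriple n,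
          (f₁ p.1.1 * (f₂ p.1.2.1 * f₃ p.1.2.2)) ^ 2 := by
        gcongr with n
        refine (sq_tsum_mul_le _ _).trans ?_
        gcongr
        exact hF n
    _ ≤ K * ∑' q : ℤ × ℤ × ℤ, (f₁ q.1 * (f₂ q.2.1 * f₃ q.2.2)) ^ 2 := by
        rw [ENNReal.tsum_mul_left]
        gcongr
        exact tsum_tsum_subtype_fiber_le _ _ fun q : ℤ × ℤ × ℤ =>
          (f₁ q.1 * (f₂ q.2.1 * f₃ q.2.2)) ^ 2
    _ = _ := by
        simp only [mul_pow]
        rw [tsum_prod_mul (fun n => f₁ n ^ 2) fun z : ℤ × ℤ => f₂ z.1 ^ 2 * f₃ z.2 ^ 2,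
          tsum_prod_mul (fun n => f₂ n ^ 2) fun n => f₃ n ^ 2]

lemma exists_tsum_sq_normalizedMultiplier_le {s : ℝ} (hs : 1 / 2 < s) :
    ∃ C : ℝ, 0 < C ∧ ∀ n, ∑' p : NonresonantTriple n,
      ENNReal.ofReal (normalizedMultiplier s p.1.1 p.1.2.1 p.1.2.2) ^ 2 ≤
        ENNReal.ofReal C ^ 2 := by
  obtain ⟨σ, hσ, hσ', hσs⟩ : ∃ σ : ℝ, 1 / 2 < σ ∧ σ ≤ 1 ∧ σ ≤ s :=
    ⟨min s 1, lt_min hs (by norm_num), min_le_right _ _, min_le_left _ _⟩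
  have hβ : 1 < 2 * σ := by linarith
  set Z : ℝ := ∑' m : ℤ, jbR m ^ (-(2 * σ))
  have hZ : 0 < Z := by
    have hpos (m : ℤ) : 0 < jbR m ^ (-(2 * σ)) := Real.rpow_pos_of_pos (jbR_pos m) _
    exact (summable_jbR_rpow_neg hβ).tsum_pos (fun m => (hpos m).le) 0 (hpos 0)
  set A : ℝ := 4 ^ (s - σ) * 4
  have hA : 0 < A := by positivity
  refine ⟨A * (2 * Z), by positivity, fun n => ?_⟩
  let g (m : ℤ) : ℝ≥0∞ := ENNReal.ofReal (twoPeak (2 * σ) n m)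
  have hterm (p : NonresonantTriple n) :
      ENNReal.ofReal (normalizedMultiplier s p.1.1 p.1.2.1 p.1.2.2) ^ 2 ≤
        ENNReal.ofReal (A ^ 2) * (g p.1.1 * g p.1.2.2) := by
    obtain ⟨⟨n₁, n₂, n₃⟩, hn, h₁, h₃⟩ := p
    rw [← ENNReal.ofReal_pow (normalizedMultiplier_nonneg _ _ _ _),
      ← ENNReal.ofReal_mul (twoPeak_nonneg _ _ _), ← ENNReal.ofReal_mul (by positivity)]
    exact ENNReal.ofReal_le_ofReal (sq_normalizedMultiplier_le_of_le hσ.le hσ' hσs hn h₁ h₃)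
  calc _ ≤ ∑' p : NonresonantTriple n, ENNReal.ofReal (A ^ 2) * (g p.1.1 * g p.1.2.2) :=
        ENNReal.tsum_le_tsum hterm
    _ ≤ ENNReal.ofReal (A ^ 2) * ((∑' m, g m) * ∑' m, g m) := by
        rw [ENNReal.tsum_mul_left]
        gcongr
        exact tsum_nonresonantTriple_le n g g
    _ = ENNReal.ofReal (A * (2 * Z)) ^ 2 := by
        rw [tsum_ofReal_twoPeak hβ, ENNReal.ofReal_mul hA.le, ENNReal.ofReal_pow hA.le]
        ring

end TrilinearEstimate

section WeightedSequence

/-- The sequence `⟨n⟩^s ω_n`, whose `ℓ²` norm is the `ℓ²_s` norm of `ω`. -/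
noncomputable def bracketWeighted (s : ℝ) (ω : ℤ → ℝ≥0) (n : ℤ) : ℝ≥0∞ :=
  ENNReal.ofReal (jbR n ^ s) * ω n

lemma ofReal_jbR_rpow_sq (s x : ℝ) :
    ENNReal.ofReal (jbR x ^ s) ^ 2 = ENNReal.ofReal (jbR x ^ (2 * s)) := by
  rw [← ENNReal.ofReal_pow (Real.rpow_nonneg (jbR_pos x).le s), mul_comm 2 s,
    Real.rpow_mul (jbR_pos x).le, Real.rpow_two]

lemma tsum_bracketWeighted_sq_rpow_half (s : ℝ) (ω : ℤ → ℝ≥0) :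
    (∑' n, bracketWeighted s ω n ^ 2) ^ (1 / 2 : ℝ) = l2sZ s ω := by
  simp only [l2sZ, bracketWeighted, mul_pow, ofReal_jbR_rpow_sq]

lemma ofReal_jbR_rpow_mul_eq_normalizedMultiplier_mul (s : ℝ) (ω₁ ω₂ ω₃ : ℤ → ℝ≥0)
    (n₁ n₂ n₃ : ℤ) :
    ENNReal.ofReal (jbR (n₁ - n₂ + n₃ : ℤ) ^ s) *
        (ENNReal.ofReal (|(n₂ : ℝ)| * jbR (phiDNLS n₁ n₂ n₃ : ℤ) ^ (-(1 / 2) : ℝ)) *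
          ω₁ n₁ * ω₂ n₂ * ω₃ n₃) =
      ENNReal.ofReal (normalizedMultiplier s n₁ n₂ n₃) *
        (bracketWeighted s ω₁ n₁ * (bracketWeighted s ω₂ n₂ * bracketWeighted s ω₃ n₃)) := by
  have h₁ := jbR_pos n₁
  have h₂ := jbR_pos n₂
  have h₃ := jbR_pos n₃
  have hn := jbR_pos (n₁ - n₂ + n₃ : ℤ)
  have hreal : jbR (n₁ - n₂ + n₃ : ℤ) ^ s *
        (|(n₂ : ℝ)| * jbR (phiDNLS n₁ n₂ n₃ : ℤ) ^ (-(1 / 2) : ℝ)) =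
      normalizedMultiplier s n₁ n₂ n₃ * jbR n₁ ^ s * jbR n₂ ^ s * jbR n₃ ^ s := by
    rw [normalizedMultiplier, Real.div_rpow hn.le (by positivity),
      Real.mul_rpow (by positivity) h₃.le, Real.mul_rpow h₁.le h₂.le]
    field_simp
  have hM := normalizedMultiplier_nonneg s n₁ n₂ n₃
  calc _ = ENNReal.ofReal (jbR (n₁ - n₂ + n₃ : ℤ) ^ s *
        (|(n₂ : ℝ)| * jbR (phiDNLS n₁ n₂ n₃ : ℤ) ^ (-(1 / 2) : ℝ))) *
          (ω₁ n₁ * ω₂ n₂ * ω₃ n₃) := by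
        rw [ENNReal.ofReal_mul (Real.rpow_nonneg hn.le s)]
        ring
    _ = _ := by
        rw [hreal, ENNReal.ofReal_mul (by positivity), ENNReal.ofReal_mul (by positivity),
          ENNReal.ofReal_mul hM]
        unfold bracketWeighted
        ring

lemma ofReal_jbR_rpow_mul_sq_tsum_eq (s : ℝ) (ω₁ ω₂ ω₃ : ℤ → ℝ≥0) (n : ℤ) :
    ENNReal.ofReal (jbR n ^ (2 * s)) *
        (∑' p : NonresonantTriple n,
          ENNReal.ofReal (|(p.1.2.1 : ℝ)| *
              jbR (phiDNLS p.1.1 p.1.2.1 p.1.2.2 : ℤ) ^ (-(1 / 2) : ℝ)) *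
            ω₁ p.1.1 * ω₂ p.1.2.1 * ω₃ p.1.2.2) ^ 2 =
      (∑' p : NonresonantTriple n,
        ENNReal.ofReal (normalizedMultiplier s p.1.1 p.1.2.1 p.1.2.2) *
          (bracketWeighted s ω₁ p.1.1 *
            (bracketWeighted s ω₂ p.1.2.1 * bracketWeighted s ω₃ p.1.2.2))) ^ 2 := by
  rw [← ofReal_jbR_rpow_sq, ← mul_pow, ← ENNReal.tsum_mul_left]
  congr 1
  refine tsum_congr ?_
  rintro ⟨⟨n₁, n₂, n₃⟩, rfl, -⟩
  exact ofReal_jbR_rpow_mul_eq_normalizedMultiplier_mul s ω₁ ω₂ ω₃ n₁ n₂ n₃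

end WeightedSequence

theorem DNLS_A1_general (s : ℝ) (hs : 1 / 2 < s) :
    ∃ C : ℝ, 0 < C ∧
      ∀ (ω₁ ω₂ ω₃ : ℤ → ℝ≥0),
        (∑' n : ℤ, ENNReal.ofReal (jbR (n : ℝ) ^ (2 * s)) *
            (∑' p : {q : ℤ × ℤ × ℤ //
                q.1 - q.2.1 + q.2.2 = n ∧ q.2.1 ≠ q.1 ∧ q.2.1 ≠ q.2.2},
              ENNReal.ofReal ((|p.1.2.1| : ℝ) *
                  jbR ((phiDNLS p.1.1 p.1.2.1 p.1.2.2 : ℤ) : ℝ) ^ (-(1 / 2) : ℝ)) *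
                (ω₁ p.1.1 : ℝ≥0∞) * (ω₂ p.1.2.1 : ℝ≥0∞) * (ω₃ p.1.2.2 : ℝ≥0∞)) ^ 2) ^ (1 / 2 : ℝ)
          ≤ ENNReal.ofReal C * (l2sZ s ω₁ * l2sZ s ω₂ * l2sZ s ω₃) := by
  obtain ⟨C, hC, hM⟩ := exists_tsum_sq_normalizedMultiplier_le hs
  refine ⟨C, hC, fun ω₁ ω₂ ω₃ => ?_⟩
  have hsum := tsum_sq_tsum_nonresonantTriple_le
    (F := fun q => ENNReal.ofReal (normalizedMultiplier s q.1 q.2.1 q.2.2)) hM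
    (bracketWeighted s ω₁) (bracketWeighted s ω₂) (bracketWeighted s ω₃)
  calc _ ≤ (ENNReal.ofReal C ^ 2 * ((∑' n, bracketWeighted s ω₁ n ^ 2) *
          ((∑' n, bracketWeighted s ω₂ n ^ 2) * ∑' n, bracketWeighted s ω₃ n ^ 2))) ^
            (1 / 2 : ℝ) := by
        gcongr
        exact (tsum_congr (ofReal_jbR_rpow_mul_sq_tsum_eq s ω₁ ω₂ ω₃)).trans_le hsum
    _ = ENNReal.ofReal C * (l2sZ s ω₁ * l2sZ s ω₂ * l2sZ s ω₃) := by
        have hhalf : (0 : ℝ) ≤ 1 / 2 := by norm_num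
        simp only [ENNReal.mul_rpow_of_nonneg _ _ hhalf, tsum_bracketWeighted_sq_rpow_half]
        rw [← ENNReal.rpow_two, ← ENNReal.rpow_mul, mul_one_div_cancel two_ne_zero,
          ENNReal.rpow_one, mul_assoc (l2sZ s ω₁)]

/-- The fundamental estimate (A1) for the gauged derivative NLS:
for `1/2 < s < 1`, the trilinear form with multiplier `|n₂| ⟨φ⟩^{-1/2}` is bounded in
`ℓ²_s` by `C ∏ ‖ω⁽ʲ⁾‖_{ℓ²_s}`. -/
theorem DNLS_A1 (s : ℝ) (hs : 1/2 < s) (hs' : s < 1) :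
    ∃ C : ℝ, 0 < C ∧
      ∀ (ω₁ ω₂ ω₃ : ℤ → ℝ≥0),
        (∑' n : ℤ, ENNReal.ofReal (jbR (n : ℝ) ^ (2 * s)) *
            (∑' p : {q : ℤ × ℤ × ℤ //
                q.1 - q.2.1 + q.2.2 = n ∧ q.2.1 ≠ q.1 ∧ q.2.1 ≠ q.2.2},
              ENNReal.ofReal ((|p.1.2.1| : ℝ) *
                  jbR ((phiDNLS p.1.1 p.1.2.1 p.1.2.2 : ℤ) : ℝ) ^ (-(1/2) : ℝ)) *
                (ω₁ p.1.1 : ℝ≥0∞) * (ω₂ p.1.2.1 : ℝ≥0∞) * (ω₃ p.1.2.2 : ℝ≥0∞)) ^ 2) ^ (1/2 : ℝ)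
          ≤ ENNReal.ofReal C * (l2sZ s ω₁ * l2sZ s ω₂ * l2sZ s ω₃) :=
  DNLS_A1_general s hs
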